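/- arXiv:2111.07289 — 5 statements merged into one kernel-verified Lean document; each statement's English description precedes it below -/
import Mathlib

section
/- Let G be a bipartite graph with fixed parts A and B. Then the following three statements are equivalent: (1) either G is nonempty, or G is empty but both A and B are infinite sets; (2) G is proximinal for a metric space; (3) G is proximinal for a semimetric space. -/
open Set

/-- A semimetric on a set `X`: a symmetric, nonnegative distance function
vanishing exactly on the diagonal. -/
structure IsSemimetric {X : Type*} (d : X → X → ℝ) : Prop where
  nonneg : ∀ x y, 0 ≤ d x y
  symm : ∀ x y, d x y = d y x
  eq_zero_iff : ∀ x y, d x y = 0 ↔ x = y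

/-- A metric: a semimetric satisfying the triangle inequality. -/
def IsMetric {X : Type*} (d : X → X → ℝ) : Prop :=
  IsSemimetric d ∧ ∀ x y z, d x y ≤ d x z + d z y

/-- An ultrametric: a semimetric satisfying the strong triangle inequality
(which implies the triangle inequality). -/
def IsUltrametric {X : Type*} (d : X → X → ℝ) : Prop :=
  IsSemimetric d ∧ ∀ x y z, d x y ≤ max (d x z) (d z y)

/-- `dist(A,B) = inf {d a b : a ∈ A, b ∈ B}`. -/
noncomputable def SetDist {X : Type*} (d : X → X → ℝ) (A B : Set X) : ℝ :=
  sInf (Set.image2 d A B)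

/-- `A` is proximinal in `(X,d)`: every point of `X` has a best approximation in `A`. -/
def Proximinal {X : Type*} (d : X → X → ℝ) (A : Set X) : Prop :=
  ∀ x : X, ∃ a ∈ A, d x a = sInf ((d x) '' A)

/-- `G` is the proximinal graph `G_{X,d}(A,B)`: a bipartite graph with (nonempty,
disjoint, proximinal) parts `A` and `B`, whose vertex set is `A ∪ B` (all other
points of the ambient type are isolated and are not vertices of the graph), and in
which `a ∈ A` and `b ∈ B` are adjacent iff `d a b = dist(A,B)`. -/
structure ProximinalFor {X : Type*} (d : X → X → ℝ) (G : SimpleGraph X) (A B : Set X) : Prop where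
  nonemptyA : A.Nonempty
  nonemptyB : B.Nonempty
  disj : Disjoint A B
  proxA : Proximinal d A
  proxB : Proximinal d B
  edges_between : ∀ u v, G.Adj u v → (u ∈ A ∧ v ∈ B) ∨ (u ∈ B ∧ v ∈ A)
  adj_iff : ∀ a ∈ A, ∀ b ∈ B, (G.Adj a b ↔ d a b = SetDist d A B)

/-- `G` is a farthest graph for `(X,d)` with parts `A`, `B`: `a ∈ A` and `b ∈ B`
are adjacent iff `d a b = sup {d x y : x ∈ A, y ∈ B}`, i.e. iff `d a b` is an upper
bound of all the cross distances. -/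
structure FarthestFor {X : Type*} (d : X → X → ℝ) (G : SimpleGraph X) (A B : Set X) : Prop where
  nonemptyA : A.Nonempty
  nonemptyB : B.Nonempty
  disj : Disjoint A B
  edges_between : ∀ u v, G.Adj u v → (u ∈ A ∧ v ∈ B) ∨ (u ∈ B ∧ v ∈ A)
  adj_iff : ∀ a ∈ A, ∀ b ∈ B, (G.Adj a b ↔ ∀ x ∈ A, ∀ y ∈ B, d x y ≤ d a b)

/-!
If `A` is finite and `B` is proximinal, then the least of the finitely many attained distances
`dist(a, B)` is `dist(A, B)`, so `G` has an edge; by symmetry an empty proximinal graph has both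
parts infinite.

Conversely, if `G` has an edge, let adjacent points be at distance `1` and other distinct points at
distance `2`. If `G` is empty and both parts are infinite, choose a positive weight `w` taking
arbitrarily small values on `A` and on `B`, and put `d x y = max (w x) (w y)` for `x ≠ y`: the
distance from `x` to the part not containing it is `w x` and is attained, whereas `dist(A, B)` is
not attained.
-/

section Semimetric

variable {X : Type*} {d : X → X → ℝ} {A B : Set X} {a b : X}

theorem IsUltrametric.isMetric (hd : IsUltrametric d) : IsMetric d :=
  ⟨hd.1, fun x y z => (hd.2 x y z).trans
    (max_le_add_of_nonneg (hd.1.nonneg x z) (hd.1.nonneg z y))⟩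

theorem IsSemimetric.apply_self (hd : IsSemimetric d) (x : X) : d x x = 0 :=
  (hd.eq_zero_iff x x).2 rfl

theorem IsSemimetric.sInf_image_le (hd : IsSemimetric d) (x : X) (ha : a ∈ A) :
    sInf (d x '' A) ≤ d x a :=
  csInf_le ⟨0, forall_mem_image.2 fun y _ => hd.nonneg x y⟩ (mem_image_of_mem _ ha)

theorem IsSemimetric.setDist_le (hd : IsSemimetric d) (ha : a ∈ A) (hb : b ∈ B) :
    SetDist d A B ≤ d a b :=
  csInf_le ⟨0, forall_mem_image2.2 fun x _ y _ => hd.nonneg x y⟩ (mem_image2_of_mem ha hb)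

theorem setDist_eq_of_forall_le (ha : a ∈ A) (hb : b ∈ B)
    (h : ∀ a' ∈ A, ∀ b' ∈ B, d a b ≤ d a' b') : SetDist d A B = d a b :=
  IsLeast.csInf_eq ⟨mem_image2_of_mem ha hb, forall_mem_image2.2 h⟩

theorem IsSemimetric.setDist_comm (hd : IsSemimetric d) (A B : Set X) :
    SetDist d A B = SetDist d B A := by
  simp only [SetDist, image2_swap d A B, hd.symm]

theorem IsSemimetric.proximinal_of_isMinOn (hd : IsSemimetric d)
    (h : ∀ x ∉ A, ∃ a ∈ A, IsMinOn (d x) A a) : Proximinal d A := by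
  intro x
  obtain ⟨a, ha, hmin⟩ : ∃ a ∈ A, IsMinOn (d x) A a := by
    by_cases hx : x ∈ A
    · exact ⟨x, hx, isMinOn_iff.2 fun y _ => (hd.apply_self x).trans_le (hd.nonneg x y)⟩
    · exact h x hx
  have hleast : IsLeast (d x '' A) (d x a) :=
    ⟨mem_image_of_mem _ ha, forall_mem_image.2 (isMinOn_iff.1 hmin)⟩
  exact ⟨a, ha, hleast.csInf_eq.symm⟩

theorem proximinal_of_finite_image (hA : A.Nonempty) (hfin : ∀ x, (d x '' A).Finite) :
    Proximinal d A :=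
  fun x => (hA.image (d x)).csInf_mem (hfin x)

theorem Proximinal.exists_eq_setDist (hB : Proximinal d B) (hd : IsSemimetric d)
    (hA : A.Nonempty) (hfin : A.Finite) : ∃ a ∈ A, ∃ b ∈ B, d a b = SetDist d A B := by
  choose p hpB hp using hB
  obtain ⟨a, ha, hmin⟩ := exists_min_image A (fun a => d a (p a)) hfin hA
  refine ⟨a, ha, p a, hpB a, (setDist_eq_of_forall_le ha (hpB a) fun a' ha' b' hb' => ?_).symm⟩
  calc d a (p a) ≤ d a' (p a') := hmin a' ha'
    _ = sInf (d a' '' B) := hp a'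
    _ ≤ d a' b' := hd.sInf_image_le a' hb'

end Semimetric

namespace ProximinalFor

variable {X : Type*} {d : X → X → ℝ} {G : SimpleGraph X} {A B : Set X}

protected theorem symm (h : ProximinalFor d G A B) (hd : IsSemimetric d) :
    ProximinalFor d G B A where
  nonemptyA := h.nonemptyB
  nonemptyB := h.nonemptyA
  disj := h.disj.symm
  proxA := h.proxB
  proxB := h.proxA
  edges_between u v huv := (h.edges_between u v huv).symm
  adj_iff b hb a ha := by rw [G.adj_comm, hd.symm, hd.setDist_comm, h.adj_iff a ha b hb]

theorem infinite_left (h : ProximinalFor d G A B) (hd : IsSemimetric d) (hG : G.edgeSet = ∅) :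
    A.Infinite := by
  intro hfin
  obtain ⟨a, ha, b, hb, hab⟩ := h.proxB.exists_eq_setDist hd h.nonemptyA hfin
  exact eq_empty_iff_forall_notMem.1 hG s(a, b) ((h.adj_iff a ha b hb).2 hab)

theorem infinite_right (h : ProximinalFor d G A B) (hd : IsSemimetric d) (hG : G.edgeSet = ∅) :
    B.Infinite :=
  (h.symm hd).infinite_left hd hG

end ProximinalFor

section OffDiagDist

variable {X : Type*} {f : X → X → ℝ}

open Classical in
/-- The modification of `f` that vanishes on the diagonal, used to turn a positive symmetric
function into a semimetric. -/
noncomputable def offDiagDist (f : X → X → ℝ) (x y : X) : ℝ :=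
  if x = y then 0 else f x y

theorem offDiagDist_self (f : X → X → ℝ) (x : X) : offDiagDist f x x = 0 :=
  if_pos rfl

theorem offDiagDist_of_ne (f : X → X → ℝ) {x y : X} (h : x ≠ y) : offDiagDist f x y = f x y :=
  if_neg h

theorem isSemimetric_offDiagDist (hsymm : ∀ x y, f x y = f y x) (hpos : ∀ x y, 0 < f x y) :
    IsSemimetric (offDiagDist f) where
  nonneg x y := by
    rcases eq_or_ne x y with rfl | h
    · exact (offDiagDist_self f x).ge
    · exact (hpos x y).le.trans_eq (offDiagDist_of_ne f h).symm
  symm x y := by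
    rcases eq_or_ne x y with rfl | h
    · rfl
    · rw [offDiagDist_of_ne f h, offDiagDist_of_ne f h.symm, hsymm]
  eq_zero_iff x y := by simp [offDiagDist, (hpos x y).ne']

theorem isMetric_offDiagDist {r : ℝ} (hr : 0 < r) (hsymm : ∀ x y, f x y = f y x)
    (hf : ∀ x y, f x y ∈ Icc r (2 * r)) : IsMetric (offDiagDist f) := by
  have hd := isSemimetric_offDiagDist hsymm fun x y => hr.trans_le (hf x y).1
  refine ⟨hd, fun x y z => ?_⟩
  rcases eq_or_ne x y with rfl | hxy
  · exact (offDiagDist_self f x).trans_le (add_nonneg (hd.nonneg x z) (hd.nonneg z x))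
  rcases eq_or_ne x z with rfl | hxz
  · rw [offDiagDist_self, zero_add]
  rcases eq_or_ne z y with rfl | hzy
  · rw [offDiagDist_self, add_zero]
  rw [offDiagDist_of_ne f hxy, offDiagDist_of_ne f hxz, offDiagDist_of_ne f hzy]
  linarith [(hf x y).2, (hf x z).1, (hf z y).1]

end OffDiagDist

section AdjDist

variable {X : Type*} {G : SimpleGraph X} {A B : Set X}

open Classical in
/-- The `{0, 1, 2}`-valued metric of a graph: adjacent points are at distance `1`, other distinct
points at distance `2`. It realizes a nonempty bipartite graph as a proximinal graph. -/
noncomputable def adjDist (G : SimpleGraph X) : X → X → ℝ :=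
  offDiagDist fun x y => if G.Adj x y then 1 else 2

theorem isMetric_adjDist (G : SimpleGraph X) : IsMetric (adjDist G) := by
  refine isMetric_offDiagDist one_pos (fun x y => by rw [G.adj_comm]) fun x y => ?_
  split_ifs <;> norm_num

theorem one_le_adjDist {x y : X} (h : x ≠ y) : 1 ≤ adjDist G x y := by
  rw [adjDist, offDiagDist_of_ne _ h]
  split_ifs <;> norm_num

theorem adjDist_eq_one_iff {x y : X} : adjDist G x y = 1 ↔ G.Adj x y := by
  rcases eq_or_ne x y with rfl | h
  · simp [adjDist, offDiagDist_self]
  · simp [adjDist, offDiagDist_of_ne _ h]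

theorem finite_range_adjDist (G : SimpleGraph X) (x : X) : (range (adjDist G x)).Finite := by
  refine (toFinite {0, 1, 2}).subset (range_subset_iff.2 fun y => ?_)
  simp only [adjDist, offDiagDist]
  split_ifs <;> simp

theorem proximinal_adjDist (G : SimpleGraph X) (hA : A.Nonempty) : Proximinal (adjDist G) A :=
  proximinal_of_finite_image hA fun x => (finite_range_adjDist G x).subset (image_subset_range _ _)

theorem exists_adj_of_edgeSet_nonempty (hG : G.IsBipartiteWith A B) (hE : G.edgeSet.Nonempty) :
    ∃ a ∈ A, ∃ b ∈ B, G.Adj a b := by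
  obtain ⟨⟨u, v⟩, huv⟩ := hE
  rcases hG.mem_of_adj huv with ⟨hu, hv⟩ | ⟨hu, hv⟩
  · exact ⟨u, hu, v, hv, huv⟩
  · exact ⟨v, hv, u, hu, G.adj_symm huv⟩

theorem setDist_adjDist (hG : G.IsBipartiteWith A B) (hE : G.edgeSet.Nonempty) :
    SetDist (adjDist G) A B = 1 := by
  obtain ⟨a, ha, b, hb, hab⟩ := exists_adj_of_edgeSet_nonempty hG hE
  have hab_one : adjDist G a b = 1 := adjDist_eq_one_iff.2 hab
  rw [← hab_one]
  refine setDist_eq_of_forall_le ha hb fun a' ha' b' hb' => ?_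
  exact hab_one.trans_le (one_le_adjDist (hG.disjoint.ne_of_mem ha' hb'))

theorem proximinalFor_adjDist (hG : G.IsBipartiteWith A B) (hE : G.edgeSet.Nonempty) :
    ProximinalFor (adjDist G) G A B := by
  obtain ⟨a, ha, b, hb, -⟩ := exists_adj_of_edgeSet_nonempty hG hE
  exact
    { nonemptyA := ⟨a, ha⟩
      nonemptyB := ⟨b, hb⟩
      disj := hG.disjoint
      proxA := proximinal_adjDist G ⟨a, ha⟩
      proxB := proximinal_adjDist G ⟨b, hb⟩
      edges_between := fun _ _ huv => hG.mem_of_adj huv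
      adj_iff := fun _ _ _ _ => by rw [setDist_adjDist hG hE, adjDist_eq_one_iff] }

end AdjDist

section MaxDist

variable {X : Type*} {w : X → ℝ} {A B C : Set X}

/-- The distance of a weighted set: distinct points are as far apart as the larger of their weights.
For a suitable positive weight it realizes an empty bipartite graph with infinite parts as a
proximinal graph. -/
noncomputable def maxDist (w : X → ℝ) : X → X → ℝ :=
  offDiagDist fun x y => max (w x) (w y)

theorem maxDist_of_ne {x y : X} (h : x ≠ y) : maxDist w x y = max (w x) (w y) :=
  offDiagDist_of_ne _ h

theorem isUltrametric_maxDist (hw : ∀ x, 0 < w x) : IsUltrametric (maxDist w) := by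
  have hd : IsSemimetric (maxDist w) :=
    isSemimetric_offDiagDist (fun x y => max_comm (w x) (w y)) fun x y => lt_max_of_lt_left (hw x)
  refine ⟨hd, fun x y z => ?_⟩
  rcases eq_or_ne x y with rfl | hxy
  · exact (hd.apply_self x).trans_le (le_max_of_le_left (hd.nonneg x z))
  rcases eq_or_ne x z with rfl | hxz
  · exact le_max_right _ _
  rcases eq_or_ne z y with rfl | hzy
  · exact le_max_left _ _
  rw [maxDist_of_ne hxy, maxDist_of_ne hxz, maxDist_of_ne hzy]
  exact max_le_max (le_max_left _ _) (le_max_right _ _)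

theorem proximinal_maxDist (hw : ∀ x, 0 < w x) (hC : ∀ x ∉ C, ∃ c ∈ C, w c ≤ w x) :
    Proximinal (maxDist w) C := by
  refine (isUltrametric_maxDist hw).1.proximinal_of_isMinOn fun x hx => ?_
  obtain ⟨c, hc, hcx⟩ := hC x hx
  refine ⟨c, hc, isMinOn_iff.2 fun y hy => ?_⟩
  calc maxDist w x c = max (w x) (w c) := maxDist_of_ne (ne_of_mem_of_not_mem hc hx).symm
    _ = w x := max_eq_left hcx
    _ ≤ max (w x) (w y) := le_max_left _ _
    _ = maxDist w x y := (maxDist_of_ne (ne_of_mem_of_not_mem hy hx).symm).symm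

theorem setDist_maxDist_lt (hw : ∀ x, 0 < w x) (hAB : Disjoint A B)
    (hA : ∀ ε > 0, ∃ a ∈ A, w a < ε) (hB : ∀ ε > 0, ∃ b ∈ B, w b < ε) {x y : X} (hxy : x ≠ y) :
    SetDist (maxDist w) A B < maxDist w x y := by
  have hpos : 0 < max (w x) (w y) := lt_max_of_lt_left (hw x)
  obtain ⟨a, ha, hwa⟩ := hA _ hpos
  obtain ⟨b, hb, hwb⟩ := hB _ hpos
  calc SetDist (maxDist w) A B ≤ maxDist w a b := (isUltrametric_maxDist hw).1.setDist_le ha hb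
    _ = max (w a) (w b) := maxDist_of_ne (hAB.ne_of_mem ha hb)
    _ < max (w x) (w y) := max_lt hwa hwb
    _ = maxDist w x y := (maxDist_of_ne hxy).symm

theorem proximinalFor_maxDist_bot (hw : ∀ x, 0 < w x) (hAB : Disjoint A B)
    (hA : ∀ ε > 0, ∃ a ∈ A, w a < ε) (hB : ∀ ε > 0, ∃ b ∈ B, w b < ε) :
    ProximinalFor (maxDist w) ⊥ A B where
  nonemptyA := (hA 1 one_pos).imp fun _ => And.left
  nonemptyB := (hB 1 one_pos).imp fun _ => And.left
  disj := hAB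
  proxA := proximinal_maxDist hw fun x _ =>
    (hA (w x) (hw x)).imp fun _ => And.imp_right le_of_lt
  proxB := proximinal_maxDist hw fun x _ =>
    (hB (w x) (hw x)).imp fun _ => And.imp_right le_of_lt
  edges_between _ _ h := h.elim
  adj_iff _ ha _ hb :=
    iff_of_false id (setDist_maxDist_lt hw hAB hA hB (hAB.ne_of_mem ha hb)).ne'

theorem exists_pos_forall_exists_mem_lt (hA : A.Infinite) :
    ∃ w : X → ℝ, (∀ x, 0 < w x) ∧ ∀ ε > 0, ∃ a ∈ A, w a < ε := by
  obtain ⟨g, hg⟩ := (Subtype.val_injective.comp (hA.natEmbedding A).injective).hasLeftInverse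
  refine ⟨fun x => 1 / (g x + 1), fun x => Nat.one_div_pos_of_nat, fun ε hε => ?_⟩
  obtain ⟨n, hn⟩ := exists_nat_one_div_lt hε
  have hgn : g (hA.natEmbedding A n) = n := hg n
  exact ⟨hA.natEmbedding A n, Subtype.coe_prop _, by simpa only [hgn] using hn⟩

theorem exists_pos_forall_exists_mem_lt_and (hA : A.Infinite) (hB : B.Infinite) :
    ∃ w : X → ℝ, (∀ x, 0 < w x) ∧ (∀ ε > 0, ∃ a ∈ A, w a < ε) ∧ ∀ ε > 0, ∃ b ∈ B, w b < ε := by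
  obtain ⟨u, hu, huA⟩ := exists_pos_forall_exists_mem_lt hA
  obtain ⟨v, hv, hvB⟩ := exists_pos_forall_exists_mem_lt hB
  exact ⟨fun x => min (u x) (v x), fun x => lt_min (hu x) (hv x),
    fun ε hε => (huA ε hε).imp fun _ => And.imp_right min_lt_of_left_lt,
    fun ε hε => (hvB ε hε).imp fun _ => And.imp_right min_lt_of_right_lt⟩

end MaxDist

theorem stmt0_general {V : Type*} (G : SimpleGraph V) (A B : Set V) (hAB : Disjoint A B)
    (hbip : ∀ u v, G.Adj u v → (u ∈ A ∧ v ∈ B) ∨ (u ∈ B ∧ v ∈ A)) :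
    List.TFAE [
      G.edgeSet.Nonempty ∨ (G.edgeSet = ∅ ∧ A.Infinite ∧ B.Infinite),
      ∃ d : V → V → ℝ, IsMetric d ∧ ProximinalFor d G A B,
      ∃ d : V → V → ℝ, IsSemimetric d ∧ ProximinalFor d G A B] := by
  tfae_have 1 → 2
  | .inl hE => ⟨adjDist G, isMetric_adjDist G, proximinalFor_adjDist ⟨hAB, hbip⟩ hE⟩
  | .inr ⟨hE, hA, hB⟩ => by
    obtain rfl := SimpleGraph.edgeSet_eq_empty.1 hE
    obtain ⟨w, hw, hwA, hwB⟩ := exists_pos_forall_exists_mem_lt_and hA hB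
    exact ⟨maxDist w, (isUltrametric_maxDist hw).isMetric,
      proximinalFor_maxDist_bot hw hAB hwA hwB⟩
  tfae_have 2 → 3
  | ⟨d, hd, h⟩ => ⟨d, hd.1, h⟩
  tfae_have 3 → 1
  | ⟨d, hd, h⟩ => (eq_empty_or_nonempty G.edgeSet).symm.imp_right fun hE =>
      ⟨hE, h.infinite_left hd hE, h.infinite_right hd hE⟩
  tfae_finish

/-- Theorem 2.1: for a bipartite graph `G` with fixed parts `A`, `B` (vertex set
`A ∪ B`), the following are equivalent: (1) `G` is nonempty, or `G` is empty but
both `A` and `B` are infinite; (2) `G` is proximinal for a metric space;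
(3) `G` is proximinal for a semimetric space. -/
theorem stmt0 {V : Type*} (G : SimpleGraph V) (A B : Set V)
    (hA : A.Nonempty) (hB : B.Nonempty) (hAB : Disjoint A B)
    (hcover : A ∪ B = Set.univ)
    (hbip : ∀ u v, G.Adj u v → (u ∈ A ∧ v ∈ B) ∨ (u ∈ B ∧ v ∈ A)) :
    List.TFAE [
      G.edgeSet.Nonempty ∨ (G.edgeSet = ∅ ∧ A.Infinite ∧ B.Infinite),
      ∃ d : V → V → ℝ, IsMetric d ∧ ProximinalFor d G A B,
      ∃ d : V → V → ℝ, IsSemimetric d ∧ ProximinalFor d G A B] :=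
  stmt0_general G A B hAB hbip
end

section
/- Let (X,d₁) be a semimetric space and let G = G_{X,d₁}(A,B) be a nonempty proximinal graph for (X,d₁). Then there is a metric d₂ on X such that G is also the proximinal graph G_{X,d₂}(A,B) for the metric space (X,d₂) and the distance set D(X,d₂) := {d₂(x,y) : x, y ∈ X} satisfies |D(X,d₂)| ≤ 3. -/
open Set

/-- The distance on the vertices of a graph that is `1` between adjacent vertices and `2` between
distinct non-adjacent ones; it turns adjacency into minimality of the distance. The value `2` is the
largest for which the triangle inequality holds for every graph. -/
noncomputable def edgeMetric {X : Type*} (G : SimpleGraph X) (x y : X) : ℝ :=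
  open Classical in if x = y then 0 else if G.Adj x y then 1 else 2

theorem IsMetric.of_mem_Icc {X : Type*} {d : X → X → ℝ} {r : ℝ} (hr : 0 < r)
    (hself : ∀ x, d x x = 0) (hsymm : ∀ x y, d x y = d y x)
    (hd : ∀ x y, x ≠ y → d x y ∈ Icc r (2 * r)) : IsMetric d := by
  have hpos : ∀ x y, x ≠ y → 0 < d x y := fun x y hxy => hr.trans_le (hd x y hxy).1
  have hnonneg : ∀ x y, 0 ≤ d x y := by
    intro x y
    rcases eq_or_ne x y with rfl | hxy
    · exact (hself x).ge
    · exact (hpos x y hxy).le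
  have hzero : ∀ x y, d x y = 0 ↔ x = y := fun x y =>
    ⟨fun h => by_contra fun hxy => (hpos x y hxy).ne' h, fun h => h ▸ hself x⟩
  refine ⟨⟨hnonneg, hsymm, hzero⟩, fun x y z => ?_⟩
  rcases eq_or_ne x y with rfl | hxy
  · simpa only [hself] using add_nonneg (hnonneg x z) (hnonneg z x)
  rcases eq_or_ne x z with rfl | hxz
  · rw [hself, zero_add]
  rcases eq_or_ne z y with rfl | hzy
  · rw [hself, add_zero]
  calc
    d x y ≤ 2 * r := (hd x y hxy).2
    _ = r + r := two_mul r
    _ ≤ d x z + d z y := add_le_add (hd x z hxz).1 (hd z y hzy).1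

theorem Proximinal.of_finite_image {X : Type*} {d : X → X → ℝ} {A : Set X} (hA : A.Nonempty)
    (hfin : ∀ x, (d x '' A).Finite) : Proximinal d A := by
  intro x
  obtain ⟨a, ha, hmin⟩ := (hA.image (d x)).csInf_mem (hfin x)
  exact ⟨a, ha, hmin⟩

theorem ProximinalFor.isBipartiteWith {X : Type*} {d : X → X → ℝ} {G : SimpleGraph X}
    {A B : Set X} (hG : ProximinalFor d G A B) : G.IsBipartiteWith A B :=
  ⟨hG.disj, fun u v => hG.edges_between u v⟩

theorem exists_adj_of_isBipartiteWith {X : Type*} {G : SimpleGraph X} {A B : Set X}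
    (hG : G.IsBipartiteWith A B) (hne : G.edgeSet.Nonempty) : ∃ a ∈ A, ∃ b ∈ B, G.Adj a b := by
  obtain ⟨u, v, huv⟩ :=
    SimpleGraph.ne_bot_iff_exists_adj.mp (SimpleGraph.edgeSet_nonempty.mp hne)
  rcases hG.mem_of_adj huv with ⟨hu, hv⟩ | ⟨hu, hv⟩
  · exact ⟨u, hu, v, hv, huv⟩
  · exact ⟨v, hv, u, hu, huv.symm⟩

section edgeMetric

variable {X : Type*} (G : SimpleGraph X)

theorem edgeMetric_self (x : X) : edgeMetric G x x = 0 :=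
  if_pos rfl

theorem edgeMetric_comm (x y : X) : edgeMetric G x y = edgeMetric G y x := by
  grind [edgeMetric, G.adj_comm x y]

theorem edgeMetric_eq_zero_or_one_or_two (x y : X) :
    edgeMetric G x y = 0 ∨ edgeMetric G x y = 1 ∨ edgeMetric G x y = 2 := by
  unfold edgeMetric
  split_ifs <;> simp

theorem edgeMetric_eq_one_iff {x y : X} : edgeMetric G x y = 1 ↔ G.Adj x y := by
  unfold edgeMetric
  split_ifs <;> simp_all

theorem edgeMetric_mem_Icc_of_ne {x y : X} (hxy : x ≠ y) : edgeMetric G x y ∈ Icc 1 2 := by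
  rw [edgeMetric, if_neg hxy]
  split_ifs <;> norm_num

theorem isMetric_edgeMetric : IsMetric (edgeMetric G) := by
  refine .of_mem_Icc one_pos (edgeMetric_self G) (edgeMetric_comm G) fun x y hxy => ?_
  simpa only [mul_one] using edgeMetric_mem_Icc_of_ne G hxy

theorem proximinal_edgeMetric {A : Set X} (hA : A.Nonempty) : Proximinal (edgeMetric G) A := by
  refine .of_finite_image hA fun x => (toFinite {0, 1, 2}).subset ?_
  rintro _ ⟨y, -, rfl⟩
  exact edgeMetric_eq_zero_or_one_or_two G x y

variable {G} {A B : Set X}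

theorem setDist_edgeMetric_eq_one {a₀ b₀ : X} (hdisj : Disjoint A B) (ha₀ : a₀ ∈ A) (hb₀ : b₀ ∈ B)
    (hab₀ : G.Adj a₀ b₀) : SetDist (edgeMetric G) A B = 1 := by
  have hleast : IsLeast (image2 (edgeMetric G) A B) 1 := by
    refine ⟨⟨a₀, ha₀, b₀, hb₀, (edgeMetric_eq_one_iff G).mpr hab₀⟩, ?_⟩
    rintro _ ⟨a, ha, b, hb, rfl⟩
    exact (edgeMetric_mem_Icc_of_ne G (hdisj.ne_of_mem ha hb)).1
  exact hleast.csInf_eq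

theorem proximinalFor_edgeMetric (hG : G.IsBipartiteWith A B) (hne : G.edgeSet.Nonempty) :
    ProximinalFor (edgeMetric G) G A B := by
  obtain ⟨a, ha, b, hb, hab⟩ := exists_adj_of_isBipartiteWith hG hne
  have hdist : SetDist (edgeMetric G) A B = 1 := setDist_edgeMetric_eq_one hG.disjoint ha hb hab
  exact
    { nonemptyA := ⟨a, ha⟩
      nonemptyB := ⟨b, hb⟩
      disj := hG.disjoint
      proxA := proximinal_edgeMetric G ⟨a, ha⟩
      proxB := proximinal_edgeMetric G ⟨b, hb⟩
      edges_between := fun _ _ huv => hG.mem_of_adj huv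
      adj_iff := fun _ _ _ _ => by rw [hdist, edgeMetric_eq_one_iff] }

end edgeMetric

theorem stmt2_general {X : Type*} {G : SimpleGraph X} {A B : Set X}
    (hG : G.IsBipartiteWith A B) (hne : G.edgeSet.Nonempty) :
    ∃ d : X → X → ℝ, IsMetric d ∧ ProximinalFor d G A B ∧
      ∃ r₁ r₂ r₃ : ℝ, ∀ x y : X, d x y = r₁ ∨ d x y = r₂ ∨ d x y = r₃ :=
  ⟨edgeMetric G, isMetric_edgeMetric G, proximinalFor_edgeMetric hG hne,
    0, 1, 2, edgeMetric_eq_zero_or_one_or_two G⟩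

/-- Corollary 2.3: if `G = G_{X,d₁}(A,B)` is a nonempty proximinal graph for a
semimetric space `(X,d₁)`, then there is a metric `d₂` on `X` with
`G = G_{X,d₂}(A,B)` and `|D(X,d₂)| ≤ 3`. -/
theorem stmt2 {X : Type*} (d₁ : X → X → ℝ) (hd₁ : IsSemimetric d₁)
    (G : SimpleGraph X) (A B : Set X) (hG : ProximinalFor d₁ G A B)
    (hne : G.edgeSet.Nonempty) :
    ∃ d₂ : X → X → ℝ, IsMetric d₂ ∧ ProximinalFor d₂ G A B ∧
      ∃ r₁ r₂ r₃ : ℝ, ∀ x y : X, d₂ x y = r₁ ∨ d₂ x y = r₂ ∨ d₂ x y = r₃ :=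
  stmt2_general hG.isBipartiteWith hne
end

section
/- Let H be a graph, let G = G(A,B) be a bipartite graph with fixed parts A and B, and suppose Φ : V(G) → V(H) is an isomorphism of G and H. Then H is a bipartite graph with parts Φ(A) and Φ(B); moreover G(A,B) is proximinal if and only if H(Φ(A),Φ(B)) is proximinal, and in that case there exist a metric d on the set X = A ∪ B and a metric ρ on the set Y = Φ(A) ∪ Φ(B) such that G = G_{X,d}(A,B), H = H_{Y,ρ}(Φ(A),Φ(B)), and Φ : X → Y is an isometry of (X,d) and (Y,ρ) (that is, d(x,y) = ρ(Φ(x),Φ(y)) for all x, y ∈ X). -/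
open Set

/-!
In a semimetric space, an infimum of distances that is attained is a least distance, so whether a
set is proximinal and which pairs realise `dist(A,B)` depend only on the order between distances.
Hence composing a semimetric with a strictly increasing function that fixes `0` and maps positive
reals into `[1, 2]` does not change its proximinal graphs. The result is a metric, because two
nonzero distances always add up to at least `2`, and it is carried along `Φ` to an isometric copy.
-/

theorem eq_csInf_iff_mem_lowerBounds {α : Type*} [ConditionallyCompleteLattice α] {s : Set α}
    {a : α} (hs : BddBelow s) (ha : a ∈ s) : a = sInf s ↔ a ∈ lowerBounds s :=
  ⟨fun h _ hb => h ▸ csInf_le hs hb, fun h => (IsLeast.csInf_eq ⟨ha, h⟩).symm⟩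

section Semimetric

variable {X Y : Type*} {d : X → X → ℝ} {A B : Set X}

theorem IsSemimetric.comp_injective {ρ : Y → Y → ℝ} (hρ : IsSemimetric ρ) {f : X → Y}
    (hf : Function.Injective f) : IsSemimetric fun x y => ρ (f x) (f y) where
  nonneg _ _ := hρ.nonneg _ _
  symm _ _ := hρ.symm _ _
  eq_zero_iff _ _ := (hρ.eq_zero_iff _ _).trans hf.eq_iff

theorem IsMetric.comp_injective {ρ : Y → Y → ℝ} (hρ : IsMetric ρ) {f : X → Y}
    (hf : Function.Injective f) : IsMetric fun x y => ρ (f x) (f y) :=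
  ⟨hρ.1.comp_injective hf, fun _ _ _ => hρ.2 _ _ _⟩

theorem IsSemimetric.strictMonoOn_comp (hd : IsSemimetric d) {φ : ℝ → ℝ}
    (hφ : StrictMonoOn φ (Ici 0)) (hφ₀ : φ 0 = 0) : IsSemimetric fun x y => φ (d x y) where
  nonneg x y := hφ₀ ▸ hφ.monotoneOn self_mem_Ici (hd.nonneg x y) (hd.nonneg x y)
  symm x y := congrArg φ (hd.symm x y)
  eq_zero_iff x y := by
    rw [← hd.eq_zero_iff, ← hφ.eq_iff_eq (hd.nonneg x y) self_mem_Ici, hφ₀]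

theorem IsSemimetric.pos (hd : IsSemimetric d) {x y : X} (hxy : x ≠ y) : 0 < d x y :=
  (hd.nonneg x y).lt_of_ne' (mt (hd.eq_zero_iff x y).1 hxy)

theorem IsSemimetric.isMetric_of_mem_Icc (hd : IsSemimetric d) {r : ℝ}
    (h : ∀ x y, x ≠ y → d x y ∈ Icc r (2 * r)) : IsMetric d := by
  refine ⟨hd, fun x y z => ?_⟩
  have self (x) : d x x = 0 := (hd.eq_zero_iff x x).2 rfl
  rcases eq_or_ne x z with rfl | hxz
  · simp [self]
  rcases eq_or_ne z y with rfl | hzy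
  · simp [self]
  rcases eq_or_ne x y with rfl | hxy
  · simpa only [self] using add_nonneg (hd.nonneg x z) (hd.nonneg z x)
  · linarith [(h x z hxz).1, (h z y hzy).1, (h x y hxy).2]

theorem IsSemimetric.proximinal_iff (hd : IsSemimetric d) :
    Proximinal d A ↔ ∀ x, ∃ a ∈ A, ∀ b ∈ A, d x a ≤ d x b := by
  refine forall_congr' fun x => exists_congr fun a => and_congr_right fun ha => ?_
  have bdd : BddBelow (d x '' A) := ⟨0, forall_mem_image.2 fun b _ => hd.nonneg x b⟩
  rw [eq_csInf_iff_mem_lowerBounds bdd (mem_image_of_mem _ ha), mem_lowerBounds, forall_mem_image]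

theorem IsSemimetric.eq_setDist_iff (hd : IsSemimetric d) {a b : X} (ha : a ∈ A) (hb : b ∈ B) :
    d a b = SetDist d A B ↔ ∀ x ∈ A, ∀ y ∈ B, d a b ≤ d x y := by
  have bdd : BddBelow (image2 d A B) := ⟨0, forall_mem_image2.2 fun x _ y _ => hd.nonneg x y⟩
  rw [SetDist, eq_csInf_iff_mem_lowerBounds bdd (mem_image2_of_mem ha hb), mem_lowerBounds,
    forall_mem_image2]

end Semimetric

/-- The bijection `Φ` is a weak similarity of `(X, d)` and `(Y, ρ)`: it preserves and reflects the
order between distances. Equivalently, `d x y = φ (ρ (Φ x) (Φ y))` for a strictly increasing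
bijection `φ` between the sets of distances; the form used here avoids mentioning these sets.
Bijections of this kind transport proximinal graphs. -/
def IsWeakSimilarity {X Y : Type*} (d : X → X → ℝ) (ρ : Y → Y → ℝ) (Φ : X ≃ Y) : Prop :=
  ∀ x y u v, d x y ≤ d u v ↔ ρ (Φ x) (Φ y) ≤ ρ (Φ u) (Φ v)

namespace IsWeakSimilarity

variable {X Y Z : Type*} {d : X → X → ℝ} {ρ : Y → Y → ℝ} {σ : Z → Z → ℝ} {Φ : X ≃ Y} {Ψ : Y ≃ Z}
  {A B : Set X}

theorem of_isometry (h : ∀ x y, d x y = ρ (Φ x) (Φ y)) : IsWeakSimilarity d ρ Φ :=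
  fun x y u v => by rw [h, h]

theorem trans (h : IsWeakSimilarity d ρ Φ) (h' : IsWeakSimilarity ρ σ Ψ) :
    IsWeakSimilarity d σ (Φ.trans Ψ) :=
  fun x y u v => (h x y u v).trans (h' _ _ _ _)

theorem proximinal_image_iff (h : IsWeakSimilarity d ρ Φ) (hd : IsSemimetric d)
    (hρ : IsSemimetric ρ) : Proximinal ρ (Φ '' A) ↔ Proximinal d A := by
  simp only [hρ.proximinal_iff, hd.proximinal_iff, Φ.surjective.forall, exists_mem_image,
    forall_mem_image, h _ _ _ _]

theorem eq_setDist_image_iff (h : IsWeakSimilarity d ρ Φ) (hd : IsSemimetric d)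
    (hρ : IsSemimetric ρ) {a b : X} (ha : a ∈ A) (hb : b ∈ B) :
    ρ (Φ a) (Φ b) = SetDist ρ (Φ '' A) (Φ '' B) ↔ d a b = SetDist d A B := by
  simp only [hρ.eq_setDist_iff (mem_image_of_mem Φ ha) (mem_image_of_mem Φ hb),
    hd.eq_setDist_iff ha hb, forall_mem_image, h _ _ _ _]

end IsWeakSimilarity

section Metrization

-- The term `sign t` creates the gap between `0` and `1` that makes the transformed distance,
-- with values in `{0} ∪ [1, 2]`, a metric.
theorem strictMonoOn_sign_add_div_one_add :
    StrictMonoOn (fun t : ℝ => Real.sign t + t / (1 + t)) (Ici 0) := by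
  intro s hs t _ hst
  rw [mem_Ici] at hs
  have ht : 0 < t := hs.trans_lt hst
  have sign_le : Real.sign s ≤ Real.sign t := by
    rw [Real.sign_of_pos ht]
    rcases Real.sign_apply_eq s with h | h | h <;> norm_num [h]
  have div_lt : s / (1 + s) < t / (1 + t) := by
    rw [div_lt_div_iff₀ (by positivity) (by positivity)]
    linarith
  exact add_lt_add_of_le_of_lt sign_le div_lt

theorem sign_add_div_one_add_mem_Icc {t : ℝ} (ht : 0 < t) :
    Real.sign t + t / (1 + t) ∈ Icc 1 2 := by
  have div_nonneg : 0 ≤ t / (1 + t) := by positivity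
  have div_le_one : t / (1 + t) ≤ 1 := div_le_one_of_le₀ (by linarith) (by positivity)
  rw [Real.sign_of_pos ht]
  constructor <;> linarith

theorem IsSemimetric.exists_isMetric_isWeakSimilarity {X : Type*} {d : X → X → ℝ}
    (hd : IsSemimetric d) : ∃ e : X → X → ℝ, IsMetric e ∧ IsWeakSimilarity d e (Equiv.refl X) := by
  have mono := strictMonoOn_sign_add_div_one_add
  refine ⟨fun x y => Real.sign (d x y) + d x y / (1 + d x y), ?_, fun x y u v =>
    (mono.le_iff_le (hd.nonneg x y) (hd.nonneg u v)).symm⟩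
  refine (hd.strictMonoOn_comp mono (by simp)).isMetric_of_mem_Icc (r := 1) fun x y hxy => ?_
  simpa only [mul_one] using sign_add_div_one_add_mem_Icc (hd.pos hxy)

end Metrization

section Graph

variable {V W : Type*} {G : SimpleGraph V} {H : SimpleGraph W} {d : V → V → ℝ} {ρ : W → W → ℝ}
  {A B : Set V}

theorem isBipartiteWith_image_iff (Φ : G ≃g H) :
    H.IsBipartiteWith (Φ '' A) (Φ '' B) ↔ G.IsBipartiteWith A B := by
  have disj : Disjoint (Φ '' A) (Φ '' B) ↔ Disjoint A B := disjoint_image_iff Φ.injective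
  have mem : (∀ u v, H.Adj u v → u ∈ Φ '' A ∧ v ∈ Φ '' B ∨ u ∈ Φ '' B ∧ v ∈ Φ '' A) ↔
      ∀ u v, G.Adj u v → u ∈ A ∧ v ∈ B ∨ u ∈ B ∧ v ∈ A := by
    simp only [Φ.surjective.forall, Φ.injective.mem_set_image, Φ.map_adj_iff]
  exact ⟨fun h => ⟨disj.1 h.disjoint, mem.1 h.mem_of_adj⟩,
    fun h => ⟨disj.2 h.disjoint, mem.2 h.mem_of_adj⟩⟩

theorem proximinalFor_iff :
    ProximinalFor d G A B ↔ (A.Nonempty ∧ B.Nonempty) ∧ G.IsBipartiteWith A B ∧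
      (Proximinal d A ∧ Proximinal d B) ∧
      ∀ a ∈ A, ∀ b ∈ B, (G.Adj a b ↔ d a b = SetDist d A B) :=
  ⟨fun h => ⟨⟨h.nonemptyA, h.nonemptyB⟩, ⟨h.disj, h.edges_between⟩, ⟨h.proxA, h.proxB⟩, h.adj_iff⟩,
    fun ⟨⟨hA, hB⟩, hG, ⟨hdA, hdB⟩, hadj⟩ => ⟨hA, hB, hG.disjoint, hdA, hdB, hG.mem_of_adj, hadj⟩⟩

theorem IsWeakSimilarity.proximinalFor_image_iff {Φ : G ≃g H}
    (h : IsWeakSimilarity d ρ Φ.toEquiv) (hd : IsSemimetric d) (hρ : IsSemimetric ρ) :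
    ProximinalFor ρ H (Φ '' A) (Φ '' B) ↔ ProximinalFor d G A B := by
  have prox (C : Set V) : Proximinal ρ (Φ '' C) ↔ Proximinal d C := h.proximinal_image_iff hd hρ
  have adj : (∀ a ∈ Φ '' A, ∀ b ∈ Φ '' B,
        (H.Adj a b ↔ ρ a b = SetDist ρ (Φ '' A) (Φ '' B))) ↔
      ∀ a ∈ A, ∀ b ∈ B, (G.Adj a b ↔ d a b = SetDist d A B) := by
    simp only [forall_mem_image, Φ.map_adj_iff]
    exact forall₄_congr fun a ha b hb => iff_congr Iff.rfl (h.eq_setDist_image_iff hd hρ ha hb)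
  simp only [proximinalFor_iff, image_nonempty, isBipartiteWith_image_iff Φ, prox, adj]

theorem exists_isSemimetric_proximinalFor_image_iff (Φ : G ≃g H) :
    (∃ d, IsSemimetric d ∧ ProximinalFor d G A B) ↔
      ∃ ρ, IsSemimetric ρ ∧ ProximinalFor ρ H (Φ '' A) (Φ '' B) := by
  constructor
  · rintro ⟨d, hd, hG⟩
    have hρ := hd.comp_injective Φ.symm.injective
    have sim := IsWeakSimilarity.of_isometry (d := d)
      (ρ := fun u v => d (Φ.symm u) (Φ.symm v)) (Φ := Φ.toEquiv) (by simp)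
    exact ⟨_, hρ, (sim.proximinalFor_image_iff hd hρ).2 hG⟩
  · rintro ⟨ρ, hρ, hH⟩
    have hd := hρ.comp_injective Φ.injective
    have sim := IsWeakSimilarity.of_isometry (d := fun x y => ρ (Φ x) (Φ y)) (ρ := ρ)
      (Φ := Φ.toEquiv) fun _ _ => rfl
    exact ⟨_, hd, (sim.proximinalFor_image_iff hd hρ).1 hH⟩

theorem ProximinalFor.exists_isMetric_isometry (hG : ProximinalFor d G A B) (hd : IsSemimetric d)
    (Φ : G ≃g H) :
    ∃ (e : V → V → ℝ) (ρ : W → W → ℝ), IsMetric e ∧ IsMetric ρ ∧ ProximinalFor e G A B ∧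
      ProximinalFor ρ H (Φ '' A) (Φ '' B) ∧ ∀ x y, e x y = ρ (Φ x) (Φ y) := by
  obtain ⟨e, he, sim⟩ := hd.exists_isMetric_isWeakSimilarity
  let ρ : W → W → ℝ := fun u v => e (Φ.symm u) (Φ.symm v)
  have hρ : IsMetric ρ := he.comp_injective Φ.symm.injective
  have isom : ∀ x y, e x y = ρ (Φ x) (Φ y) := by simp [ρ]
  have simΦ : IsWeakSimilarity e ρ Φ.toEquiv := .of_isometry isom
  have hH : ProximinalFor ρ H (Φ '' A) (Φ '' B) :=
    ((sim.trans simΦ).proximinalFor_image_iff hd hρ.1).2 hG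
  exact ⟨e, ρ, he, hρ, (simΦ.proximinalFor_image_iff he.1 hρ.1).1 hH, hH, isom⟩

end Graph

/-- Proposition 2.3 of the paper: if `Φ` is an isomorphism of a bipartite graph
`G = G(A,B)` (with vertex set `A ∪ B`) onto a graph `H`, then `H` is bipartite with
parts `Φ(A)`, `Φ(B)`; moreover `G(A,B)` is proximinal iff `H(Φ(A),Φ(B))` is
proximinal, and in that case there are metrics `d` on `X = A ∪ B` and `ρ` on
`Y = Φ(A) ∪ Φ(B)` with `G = G_{X,d}(A,B)`, `H = H_{Y,ρ}(Φ(A),Φ(B))` and `Φ` an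
isometry of `(X,d)` and `(Y,ρ)`. -/
theorem stmt3 {V : Type*} {W : Type*} (G : SimpleGraph V) (H : SimpleGraph W)
    (A B : Set V)
    (hA : A.Nonempty) (hB : B.Nonempty) (hAB : Disjoint A B)
    (hcover : A ∪ B = Set.univ)
    (hbip : ∀ u v, G.Adj u v → (u ∈ A ∧ v ∈ B) ∨ (u ∈ B ∧ v ∈ A))
    (Φ : G ≃g H) :
    ((⇑Φ '' A).Nonempty ∧ (⇑Φ '' B).Nonempty ∧ Disjoint (⇑Φ '' A) (⇑Φ '' B) ∧
      ⇑Φ '' A ∪ ⇑Φ '' B = Set.univ ∧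
      (∀ u v, H.Adj u v → (u ∈ ⇑Φ '' A ∧ v ∈ ⇑Φ '' B) ∨ (u ∈ ⇑Φ '' B ∧ v ∈ ⇑Φ '' A))) ∧
    ((∃ d : V → V → ℝ, IsSemimetric d ∧ ProximinalFor d G A B) ↔
      (∃ ρ : W → W → ℝ, IsSemimetric ρ ∧ ProximinalFor ρ H (⇑Φ '' A) (⇑Φ '' B))) ∧
    ((∃ d : V → V → ℝ, IsSemimetric d ∧ ProximinalFor d G A B) →
      ∃ (d : V → V → ℝ) (ρ : W → W → ℝ), IsMetric d ∧ IsMetric ρ ∧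
        ProximinalFor d G A B ∧ ProximinalFor ρ H (⇑Φ '' A) (⇑Φ '' B) ∧
        ∀ x y : V, d x y = ρ (Φ x) (Φ y)) := by
  have hH : H.IsBipartiteWith (Φ '' A) (Φ '' B) := (isBipartiteWith_image_iff Φ).2 ⟨hAB, hbip⟩
  have cover : Φ '' A ∪ Φ '' B = univ := by
    rw [← image_union, hcover, image_univ_of_surjective Φ.surjective]
  exact ⟨⟨hA.image Φ, hB.image Φ, hH.disjoint, cover, hH.mem_of_adj⟩,
    exists_isSemimetric_proximinalFor_image_iff Φ,
    fun ⟨_, hd, hG⟩ => hG.exists_isMetric_isometry hd Φ⟩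
end

section
/- Let A and B be proximinal subsets of an ultrametric space (X,d). Then the following statements are equivalent: (1) diam(B) ≤ dist(A,B); (2) the sets A₀ ⊆ A and B₀ ⊆ B are proximinal subsets of X, the equality B₀ = B holds, and every pair (a,b) ∈ A₀ × B₀ is a best proximity pair for the sets A and B. -/
open Set

/-!
Let `D = dist(A, B)` and suppose `diam B ≤ D`. By the strong triangle inequality every closed ball
of radius `D` centred at a point of `B` contains the whole of `B`, and all these balls coincide. So
`A₀` is the intersection of `A` with this one ball, whichever centre `b ∈ B` is used; hence every
point of `A₀` is at distance exactly `D` from every point of `B`. The ball does meet `A`: a point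
of `A` nearest to any `b ∈ B` is at distance `D` from `b`. Finally, in an ultrametric space a
proximinal set stays proximinal when cut down to a closed ball that it meets: for a point inside the
ball the nearest point of the set already lies in the ball, and a point outside the ball is
equidistant from all points of the ball. Conversely, if some `a` is at distance `D` from every point
of `B`, then `diam B ≤ D`.
-/

theorem eq_sInf_image_iff_isMinOn {α β : Type*} [ConditionallyCompleteLattice β] {f : α → β}
    {s : Set α} {a : α} (hbdd : BddBelow (f '' s)) (ha : a ∈ s) :
    f a = sInf (f '' s) ↔ IsMinOn f s a :=
  ⟨fun h _ hb => h.trans_le (csInf_le hbdd (mem_image_of_mem f hb)),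
    fun h => (IsLeast.csInf_eq ⟨mem_image_of_mem f ha, forall_mem_image.2 h⟩).symm⟩

/-- A pseudo-ultrametric: an ultrametric for which distinct points may have distance zero.
Nonnegativity is not a field because it follows from the others. -/
structure IsPseudoUltrametric {X : Type*} (d : X → X → ℝ) : Prop where
  self_eq_zero : ∀ x, d x x = 0
  symm : ∀ x y, d x y = d y x
  le_max : ∀ x y z, d x y ≤ max (d x z) (d z y)

/-- The set `A₀` of points of `A` that realize `dist(A, B)` with some point of `B`. -/
def proximalLeft {X : Type*} (d : X → X → ℝ) (A B : Set X) : Set X :=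
  {x ∈ A | ∃ y ∈ B, d x y = SetDist d A B}

/-- The set `B₀` of points of `B` that realize `dist(A, B)` with some point of `A`. -/
def proximalRight {X : Type*} (d : X → X → ℝ) (A B : Set X) : Set X :=
  {y ∈ B | ∃ x ∈ A, d x y = SetDist d A B}

section

variable {X : Type*} {d : X → X → ℝ} {A B : Set X}

theorem IsUltrametric.isPseudoUltrametric (hd : IsUltrametric d) : IsPseudoUltrametric d where
  self_eq_zero x := (hd.1.eq_zero_iff x x).2 rfl
  symm := hd.1.symm
  le_max := hd.2

theorem le_setDist {r : ℝ} (hA : A.Nonempty) (hB : B.Nonempty)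
    (h : ∀ a ∈ A, ∀ b ∈ B, r ≤ d a b) : r ≤ SetDist d A B :=
  le_csInf (hA.image2 hB) (forall_mem_image2.2 h)

namespace IsPseudoUltrametric

theorem nonneg (hd : IsPseudoUltrametric d) (x y : X) : 0 ≤ d x y := by
  simpa only [hd.self_eq_zero, hd.symm y x, max_self] using hd.le_max x x y

theorem le_of_le_of_le (hd : IsPseudoUltrametric d) {x y z : X} {r : ℝ} (hxz : d x z ≤ r)
    (hzy : d z y ≤ r) : d x y ≤ r :=
  (hd.le_max x y z).trans (max_le hxz hzy)

theorem setDist_le (hd : IsPseudoUltrametric d) {a b : X} (ha : a ∈ A) (hb : b ∈ B) :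
    SetDist d A B ≤ d a b :=
  csInf_le ⟨0, forall_mem_image2.2 fun x _ y _ => hd.nonneg x y⟩ (mem_image2_of_mem ha hb)

theorem proximinal_iff_exists_isMinOn (hd : IsPseudoUltrametric d) :
    Proximinal d A ↔ ∀ x, ∃ a ∈ A, IsMinOn (d x) A a :=
  forall_congr' fun x => exists_congr fun _ => and_congr_right <|
    eq_sInf_image_iff_isMinOn ⟨0, forall_mem_image.2 fun y _ => hd.nonneg x y⟩

theorem isMinOn_closedBall_of_lt (hd : IsPseudoUltrametric d) {x b a : X} {r : ℝ} (hx : r < d x b)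
    (ha : d a b ≤ r) : IsMinOn (d x) {y | d y b ≤ r} a := by
  intro y hy
  have hya : d y a ≤ r := hd.le_of_le_of_le hy ((hd.symm b a).trans_le ha)
  have hxa : r < d x a := lt_of_not_ge fun h => hx.not_ge (hd.le_of_le_of_le h ha)
  exact (le_max_iff.1 (hd.le_max x a y)).resolve_right (hya.trans_lt hxa).not_ge

theorem proximinal_inter_closedBall (hd : IsPseudoUltrametric d) (hA : Proximinal d A) {b : X}
    {r : ℝ} (hne : (A ∩ {a | d a b ≤ r}).Nonempty) : Proximinal d (A ∩ {a | d a b ≤ r}) := by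
  rw [hd.proximinal_iff_exists_isMinOn] at hA ⊢
  intro x
  obtain ⟨a₀, ha₀, ha₀b⟩ := hne
  rcases le_or_gt (d x b) r with hxb | hxb
  · obtain ⟨a, ha, hmin⟩ := hA x
    have hxa : d x a ≤ r :=
      (hmin ha₀).trans (hd.le_of_le_of_le hxb ((hd.symm b a₀).trans_le ha₀b))
    have hab : d a b ≤ r := hd.le_of_le_of_le ((hd.symm a x).trans_le hxa) hxb
    exact ⟨a, ⟨ha, hab⟩, hmin.on_subset inter_subset_left⟩
  · exact ⟨a₀, ⟨ha₀, ha₀b⟩, (hd.isMinOn_closedBall_of_lt hxb ha₀b).on_subset inter_subset_right⟩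

theorem eq_setDist_of_isMinOn (hd : IsPseudoUltrametric d)
    (hdiam : ∀ x ∈ B, ∀ y ∈ B, d x y ≤ SetDist d A B) {a b : X} (ha : a ∈ A) (hb : b ∈ B)
    (hmin : IsMinOn (d b) A a) : d a b = SetDist d A B := by
  refine le_antisymm (le_setDist ⟨a, ha⟩ ⟨b, hb⟩ fun x hx y hy => ?_) (hd.setDist_le ha hb)
  have hby : d b y ≤ d x y := (hdiam b hb y hy).trans (hd.setDist_le hx hy)
  calc
    d a b = d b a := hd.symm a b
    _ ≤ d b x := hmin hx
    _ ≤ d x y := hd.le_of_le_of_le hby (hd.symm y x).le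

theorem proximalRight_eq (hd : IsPseudoUltrametric d) (hA : Proximinal d A)
    (hdiam : ∀ x ∈ B, ∀ y ∈ B, d x y ≤ SetDist d A B) : proximalRight d A B = B := by
  refine sep_eq_self_iff_mem_true.2 fun b hb => ?_
  obtain ⟨a, ha, hmin⟩ := hd.proximinal_iff_exists_isMinOn.1 hA b
  exact ⟨a, ha, hd.eq_setDist_of_isMinOn hdiam ha hb hmin⟩

theorem proximalLeft_eq_inter_closedBall (hd : IsPseudoUltrametric d)
    (hdiam : ∀ x ∈ B, ∀ y ∈ B, d x y ≤ SetDist d A B) {b : X} (hb : b ∈ B) :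
    proximalLeft d A B = A ∩ {a | d a b ≤ SetDist d A B} := by
  ext a
  refine and_congr_right fun ha => ⟨?_, fun hab => ⟨b, hb, hab.antisymm (hd.setDist_le ha hb)⟩⟩
  rintro ⟨y, hy, hay⟩
  exact hd.le_of_le_of_le hay.le (hdiam y hy b hb)

theorem eq_setDist_of_mem_proximalLeft (hd : IsPseudoUltrametric d)
    (hdiam : ∀ x ∈ B, ∀ y ∈ B, d x y ≤ SetDist d A B) {a b : X} (ha : a ∈ proximalLeft d A B)
    (hb : b ∈ B) : d a b = SetDist d A B := by
  rw [hd.proximalLeft_eq_inter_closedBall hdiam hb] at ha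
  exact ha.2.antisymm (hd.setDist_le ha.1 hb)

theorem proximinal_proximalLeft (hd : IsPseudoUltrametric d) (hB : B.Nonempty)
    (hA : Proximinal d A) (hdiam : ∀ x ∈ B, ∀ y ∈ B, d x y ≤ SetDist d A B) :
    Proximinal d (proximalLeft d A B) := by
  obtain ⟨b, hb⟩ := hB
  obtain ⟨-, a, ha, hab⟩ : b ∈ proximalRight d A B := (hd.proximalRight_eq hA hdiam).symm ▸ hb
  rw [hd.proximalLeft_eq_inter_closedBall hdiam hb]
  exact hd.proximinal_inter_closedBall hA ⟨a, ha, hab.le⟩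

end IsPseudoUltrametric

end

theorem stmt6_general {X : Type*} {d : X → X → ℝ} (hd : IsPseudoUltrametric d) {A B : Set X}
    (hB : B.Nonempty) (hpA : Proximinal d A) :
    (∀ x ∈ B, ∀ y ∈ B, d x y ≤ SetDist d A B) ↔
      (Proximinal d (proximalLeft d A B) ∧ proximalRight d A B = B ∧
       ∀ a ∈ proximalLeft d A B, ∀ b ∈ proximalRight d A B, d a b = SetDist d A B) := by
  constructor
  · intro hdiam
    exact ⟨hd.proximinal_proximalLeft hB hpA hdiam, hd.proximalRight_eq hpA hdiam,
      fun a ha b hb => hd.eq_setDist_of_mem_proximalLeft hdiam ha hb.1⟩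
  · rintro ⟨hA₀, hB₀, hpair⟩ x hx y hy
    obtain ⟨a, ha, -⟩ := hA₀ x
    rw [hB₀] at hpair
    exact hd.le_of_le_of_le ((hd.symm x a).trans_le (hpair a ha x hx).le) (hpair a ha y hy).le

/-- Theorem (from [CDL2021], Theorem 2.6): for proximinal subsets `A`, `B` of an
ultrametric space `(X,d)`, the inequality `diam B ≤ dist(A,B)` holds iff the sets
`A₀` and `B₀` are proximinal, `B₀ = B`, and every `(a,b) ∈ A₀ × B₀` is a best
proximity pair for `A` and `B`. -/
theorem stmt6 {X : Type*} (d : X → X → ℝ) (hd : IsUltrametric d)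
    (A B : Set X) (hA : A.Nonempty) (hB : B.Nonempty)
    (hpA : Proximinal d A) (hpB : Proximinal d B) :
    (∀ x ∈ B, ∀ y ∈ B, d x y ≤ SetDist d A B) ↔
      (Proximinal d {x ∈ A | ∃ y ∈ B, d x y = SetDist d A B} ∧
       Proximinal d {y ∈ B | ∃ x ∈ A, d x y = SetDist d A B} ∧
       {y ∈ B | ∃ x ∈ A, d x y = SetDist d A B} = B ∧
       ∀ a ∈ {x ∈ A | ∃ y ∈ B, d x y = SetDist d A B},
         ∀ b ∈ {y ∈ B | ∃ x ∈ A, d x y = SetDist d A B},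
           d a b = SetDist d A B) :=
  (stmt6_general hd.isPseudoUltrametric hB hpA).trans
    ⟨fun ⟨hA₀, hB₀, hpair⟩ => ⟨hA₀, (congrArg (Proximinal d) hB₀).mpr hpB, hB₀, hpair⟩,
      fun ⟨hA₀, _, hB₀, hpair⟩ => ⟨hA₀, hB₀, hpair⟩⟩
end

section
/- Every proximinal graph is a farthest graph, but not conversely: there exists a bipartite graph with fixed parts which is farthest but not proximinal (for example, any empty bipartite graph one of whose parts is infinite and the other finite). -/
open Set

universe u

/-!
The reciprocal of a semimetric is again a semimetric, because `0⁻¹ = 0`, and it turns the pairs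
of `A × B` at least distance into the pairs at greatest distance.

If `A` is proximinal and `B` is finite, then comparing the finitely many best approximations in `A`
of the points of `B` shows that `dist(A, B)` is attained, so a proximinal graph with a finite part
has an edge. The empty graph is nevertheless farthest when one part is infinite: give the points of
that part unbounded weights `w` and put `d x y = w x + w y` off the diagonal.
-/

namespace IsSemimetric

variable {X : Type*} {d : X → X → ℝ} {A B : Set X}

theorem pos_of_ne (hd : IsSemimetric d) {x y : X} (hxy : x ≠ y) : 0 < d x y :=
  (hd.nonneg x y).lt_of_ne' (mt (hd.eq_zero_iff x y).1 hxy)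

theorem inv (hd : IsSemimetric d) : IsSemimetric fun x y => (d x y)⁻¹ where
  nonneg x y := inv_nonneg.2 (hd.nonneg x y)
  symm x y := congrArg (·⁻¹) (hd.symm x y)
  eq_zero_iff x y := inv_eq_zero.trans (hd.eq_zero_iff x y)

theorem eq_setDist_iff_s14 (hd : IsSemimetric d) {a b : X} (ha : a ∈ A) (hb : b ∈ B) :
    d a b = SetDist d A B ↔ ∀ x ∈ A, ∀ y ∈ B, d a b ≤ d x y := by
  have hbdd : BddBelow (Set.image2 d A B) :=
    ⟨0, forall_mem_image2.2 fun x _ y _ => hd.nonneg x y⟩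
  constructor
  · intro hab x hx y hy
    exact hab.trans_le (csInf_le hbdd (mem_image2_of_mem hx hy))
  · intro hmin
    have hleast : IsLeast (Set.image2 d A B) (d a b) :=
      ⟨mem_image2_of_mem ha hb, forall_mem_image2.2 hmin⟩
    exact hleast.csInf_eq.symm

theorem exists_forall_le_of_proximinal (hd : IsSemimetric d) (hA : Proximinal d A) (x : X) :
    ∃ a ∈ A, ∀ y ∈ A, d x a ≤ d x y := by
  obtain ⟨a, ha, hxa⟩ := hA x
  have hbdd : BddBelow (d x '' A) := ⟨0, forall_mem_image.2 fun y _ => hd.nonneg x y⟩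
  exact ⟨a, ha, fun y hy => hxa.trans_le (csInf_le hbdd (mem_image_of_mem _ hy))⟩

theorem exists_eq_setDist_of_proximinal_of_finite (hd : IsSemimetric d) (hA : Proximinal d A)
    (hBfin : B.Finite) (hB : B.Nonempty) : ∃ a ∈ A, ∃ b ∈ B, d a b = SetDist d A B := by
  choose p hpA hp using hd.exists_forall_le_of_proximinal hA
  obtain ⟨b, hb, hbmin⟩ := B.exists_min_image (fun y => d y (p y)) hBfin hB
  refine ⟨p b, hpA b, b, hb, (hd.eq_setDist_iff_s14 (hpA b) hb).2 fun x hx y hy => ?_⟩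
  calc d (p b) b = d b (p b) := hd.symm _ _
    _ ≤ d y (p y) := hbmin y hy
    _ ≤ d y x := hp y x hx
    _ = d x y := hd.symm _ _

theorem farthestFor_inv (hd : IsSemimetric d) {G : SimpleGraph X} (hA : A.Nonempty)
    (hB : B.Nonempty) (hAB : Disjoint A B)
    (hG : ∀ u v, G.Adj u v → (u ∈ A ∧ v ∈ B) ∨ (u ∈ B ∧ v ∈ A))
    (hadj : ∀ a ∈ A, ∀ b ∈ B, (G.Adj a b ↔ d a b = SetDist d A B)) :
    FarthestFor (fun x y => (d x y)⁻¹) G A B where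
  nonemptyA := hA
  nonemptyB := hB
  disj := hAB
  edges_between := hG
  adj_iff a ha b hb := by
    have hpos : ∀ x ∈ A, ∀ y ∈ B, 0 < d x y := fun x hx y hy =>
      hd.pos_of_ne (hAB.ne_of_mem hx hy)
    rw [hadj a ha b hb, hd.eq_setDist_iff_s14 ha hb]
    exact forall₄_congr fun x hx y hy => (inv_le_inv₀ (hpos x hx y hy) (hpos a ha b hb)).symm

end IsSemimetric

theorem ProximinalFor.exists_adj_of_finite {X : Type*} {d : X → X → ℝ} {G : SimpleGraph X}
    {A B : Set X} (h : ProximinalFor d G A B) (hd : IsSemimetric d) (hBfin : B.Finite) :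
    ∃ a ∈ A, ∃ b ∈ B, G.Adj a b := by
  obtain ⟨a, ha, b, hb, hab⟩ :=
    hd.exists_eq_setDist_of_proximinal_of_finite h.proxA hBfin h.nonemptyB
  exact ⟨a, ha, b, hb, (h.adj_iff a ha b hb).2 hab⟩

open scoped Classical in
/-- The path distance between the leaves of a star whose leaf `x` hangs on an edge of length `w x`;
unbounded weights give semimetrics without a greatest distance. -/
noncomputable def starDist {X : Type*} (w : X → ℝ) (x y : X) : ℝ :=
  if x = y then 0 else w x + w y

section starDist

variable {X : Type*} {w : X → ℝ} {A B : Set X}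

theorem starDist_self (x : X) : starDist w x x = 0 :=
  if_pos rfl

theorem starDist_of_ne {x y : X} (hxy : x ≠ y) : starDist w x y = w x + w y :=
  if_neg hxy

theorem isSemimetric_starDist (hw : ∀ x, 0 < w x) : IsSemimetric (starDist w) := by
  have hpos : ∀ {x y : X}, x ≠ y → 0 < starDist w x y := fun {x y} hxy =>
    (starDist_of_ne hxy).symm ▸ add_pos (hw x) (hw y)
  refine ⟨fun x y => ?_, fun x y => ?_, fun x y => ⟨fun h => ?_, ?_⟩⟩
  · obtain rfl | hxy := eq_or_ne x y
    · exact (starDist_self x).ge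
    · exact (hpos hxy).le
  · obtain rfl | hxy := eq_or_ne x y
    · rfl
    · rw [starDist_of_ne hxy, starDist_of_ne hxy.symm, add_comm]
  · by_contra hxy
    exact (hpos hxy).ne' h
  · rintro rfl
    exact starDist_self x

theorem farthestFor_starDist_bot (hA : A.Nonempty) (hB : B.Nonempty) (hAB : Disjoint A B)
    (hw : ∀ a ∈ A, ∃ a' ∈ A, w a < w a') : FarthestFor (starDist w) ⊥ A B where
  nonemptyA := hA
  nonemptyB := hB
  disj := hAB
  edges_between _ _ h := h.elim
  adj_iff a ha b hb := by
    refine ⟨False.elim, fun hmax => ?_⟩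
    obtain ⟨a', ha', hlt⟩ := hw a ha
    have hle := hmax a' ha' b hb
    rw [starDist_of_ne (hAB.ne_of_mem ha' hb), starDist_of_ne (hAB.ne_of_mem ha hb)] at hle
    exact hlt.not_ge (le_of_add_le_add_right hle)

end starDist

theorem exists_nat_unbounded_of_infinite {X : Type*} {A : Set X} (hA : A.Infinite) :
    ∃ f : X → ℕ, ∀ n, ∃ a ∈ A, n < f a := by
  let e : ℕ ↪ A := hA.natEmbedding
  have he : Function.Injective fun n => (e n : X) := Subtype.val_injective.comp e.injective
  refine ⟨Function.invFun fun n => (e n : X), fun n => ⟨e (n + 1), (e (n + 1)).2, ?_⟩⟩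
  rw [Function.leftInverse_invFun he (n + 1)]
  exact n.lt_succ_self

theorem exists_farthestFor_bot_of_infinite {X : Type*} {A B : Set X} (hA : A.Infinite)
    (hB : B.Nonempty) (hAB : Disjoint A B) :
    ∃ d : X → X → ℝ, IsSemimetric d ∧ FarthestFor d ⊥ A B := by
  obtain ⟨f, hf⟩ := exists_nat_unbounded_of_infinite hA
  refine ⟨starDist fun x => (f x : ℝ) + 1, isSemimetric_starDist fun x => by positivity,
    farthestFor_starDist_bot hA.nonempty hB hAB fun a _ => ?_⟩
  obtain ⟨a', ha', hlt⟩ := hf (f a)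
  exact ⟨a', ha', by gcongr⟩

theorem not_exists_proximinalFor_bot_of_finite {X : Type*} {A B : Set X} (hBfin : B.Finite) :
    ¬ ∃ d : X → X → ℝ, IsSemimetric d ∧ ProximinalFor d ⊥ A B := by
  rintro ⟨d, hd, h⟩
  obtain ⟨a, -, b, -, hab⟩ := h.exists_adj_of_finite hd hBfin
  exact hab

theorem stmt14_general :
    (∀ (V : Type u) (G : SimpleGraph V) (A B : Set V) (d : V → V → ℝ),
        IsSemimetric d → A.Nonempty → B.Nonempty → Disjoint A B →
        (∀ u v, G.Adj u v → (u ∈ A ∧ v ∈ B) ∨ (u ∈ B ∧ v ∈ A)) →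
        (∀ a ∈ A, ∀ b ∈ B, (G.Adj a b ↔ d a b = SetDist d A B)) →
        ∃ d' : V → V → ℝ, IsSemimetric d' ∧ FarthestFor d' G A B) ∧
    (∀ (V : Type u) (A B : Set V),
        A.Infinite → B.Finite → B.Nonempty → Disjoint A B →
        (∃ d : V → V → ℝ, IsSemimetric d ∧ FarthestFor d ⊥ A B) ∧
        ¬ ∃ d : V → V → ℝ, IsSemimetric d ∧ ProximinalFor d ⊥ A B) :=
  ⟨fun _ _ _ _ _ hd hA hB hAB hG hadj => ⟨_, hd.inv, hd.farthestFor_inv hA hB hAB hG hadj⟩,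
    fun _ _ _ hA hBfin hB hAB =>
      ⟨exists_farthestFor_bot_of_infinite hA hB hAB, not_exists_proximinalFor_bot_of_finite hBfin⟩⟩

/-- Corollary 3.4: every proximinal graph is a farthest graph, but not conversely:
there is a bipartite graph with fixed parts (an empty graph with one part infinite
and the other finite) which is farthest but not proximinal. -/
theorem stmt14 :
    (∀ (V : Type u) (G : SimpleGraph V) (A B : Set V) (d : V → V → ℝ),
        IsSemimetric d → ProximinalFor d G A B →
        ∃ d' : V → V → ℝ, IsSemimetric d' ∧ FarthestFor d' G A B) ∧
    (∃ (V : Type u) (G : SimpleGraph V) (A B : Set V),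
        A.Nonempty ∧ B.Nonempty ∧ Disjoint A B ∧ A ∪ B = Set.univ ∧
        (∀ u v, G.Adj u v → (u ∈ A ∧ v ∈ B) ∨ (u ∈ B ∧ v ∈ A)) ∧
        G.edgeSet = ∅ ∧ A.Infinite ∧ B.Finite ∧
        (∃ d : V → V → ℝ, IsSemimetric d ∧ FarthestFor d G A B) ∧
        ¬ ∃ d : V → V → ℝ, IsSemimetric d ∧ ProximinalFor d G A B) := by
  obtain ⟨hfar, hbot⟩ := stmt14_general.{u}
  have hinf : ({0}ᶜ : Set (ULift.{u} ℕ)).Infinite := (finite_singleton 0).infinite_compl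
  exact ⟨fun V G A B d hd h =>
      hfar V G A B d hd h.nonemptyA h.nonemptyB h.disj h.edges_between h.adj_iff,
    ULift.{u} ℕ, ⊥, {0}ᶜ, {0}, hinf.nonempty, singleton_nonempty 0, disjoint_compl_left,
    compl_union_self _, fun _ _ h => h.elim, SimpleGraph.edgeSet_bot, hinf,
    finite_singleton 0,
    hbot _ _ _ hinf (finite_singleton 0) (singleton_nonempty 0) disjoint_compl_left⟩
end
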